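/- Let I be a nonempty finite set of voters and X a set of alternatives with at least 3 elements. Let F be a social welfare function assigning to every profile of individual preferences (a function from I to linear orders on X) a linear order on X. Suppose F satisfies: (A1, sovereignty of electors) F is surjective onto the linear orders on X; (A2, positive correlation) if for some profile P the order F(P) ranks x strictly above y, and P' is a profile obtained from P where the only change is that some electors raise the position of x in their rankings (the relative order of all pairs of alternatives other than those involving x is unchanged, and x never drops below any alternative it was above), then F(P') still ranks x strictly above y; (A3, independence of irrelevant alternatives) for any two alternatives x, y and any two profiles P, P' such that every voter ranks x versus y the same way in P as in P', F(P) ranks x above y if and only if F(P') does. Then F is a dictatorship: there exists a voter i ∈ I such that for every profile P, F(P) equals the preference order of voter i in P. -/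

import Mathlib

/-!
Independence of irrelevant alternatives makes the collective ranking of `x` and `y` depend only on
the coalition of voters ranking `y` above `x`. If `S` prevails for `y` over `x` and `T` for `z` over
`y`, then transitivity of the collective ranking makes `S ∩ T` prevail for `z` over `x`. Taking one
of the coalitions to be the set of all voters, which prevails by unanimity, shows that which
coalitions prevail does not depend on the pair of alternatives; the same fact then says that they
are closed under intersection, and totality of the collective ranking that exactly one of `S` and
`Sᶜ` prevails. So they form an ultrafilter (Kirman–Sondermann), and an ultrafilter on a finite set
of voters is principal: it is generated by the dictator.
-/

theorem lt_iff_not_gt_of_ne {X : Type*} (L : LinearOrder X) {x y : X} (hxy : x ≠ y) :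
    L.lt x y ↔ ¬ L.lt y x :=
  ⟨fun h => h.not_gt, fun h => (not_lt.mp h).lt_of_ne hxy⟩

theorem exists_ne_ne_of_three_distinct {X : Type*} (hX : ∃ a b c : X, a ≠ b ∧ b ≠ c ∧ a ≠ c)
    (x y : X) : ∃ z, z ≠ x ∧ z ≠ y := by
  obtain ⟨a, b, c, hab, hbc, hac⟩ := hX
  classical
  have hcard : ({x, y} : Finset X).card < ({a, b, c} : Finset X).card :=
    Finset.card_le_two.trans_lt (Finset.card_eq_three.mpr ⟨a, b, c, hab, hac, hbc, rfl⟩).ge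
  obtain ⟨z, -, hz⟩ := Finset.exists_mem_notMem_of_card_lt_card hcard
  exact ⟨z, by simpa using hz⟩

theorem exists_ultrafilter_mem_iff {α : Type*} {p : Set α → Prop} (univ : p Set.univ)
    (inter : ∀ S T, p S → p T → p (S ∩ T)) (compl : ∀ S, p Sᶜ ↔ ¬ p S) :
    ∃ U : Ultrafilter α, ∀ S, S ∈ U ↔ p S := by
  have empty : ¬ p ∅ := by rwa [← compl, Set.compl_empty]
  have mono : ∀ S T, p S → S ⊆ T → p T := by
    intro S T hS hST
    by_contra hT
    have hdisj : S ∩ Tᶜ = ∅ := (Set.disjoint_compl_right_iff_subset.mpr hST).inter_eq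
    exact empty (hdisj ▸ inter S Tᶜ hS ((compl T).mpr hT))
  let f : Filter α :=
    { sets := {S | p S}
      univ_sets := univ
      sets_of_superset := mono _ _
      inter_sets := inter _ _ }
  exact ⟨.ofComplNotMemIff f fun S => (not_congr (compl S)).trans not_not, fun _ => Iff.rfl⟩

section moveToTop

variable {X : Type*}

/-- The linear order obtained from `L` by moving `y` above all other elements; it is pulled back
from `WithTop X`. -/
abbrev moveToTop (L : LinearOrder X) (y : X) : LinearOrder X :=
  LinearOrder.lift' (fun u => if u = y then (⊤ : WithTop X) else u) fun u v h => by
    dsimp only at h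
    split_ifs at h <;> simp_all

theorem moveToTop_lt_iff (L : LinearOrder X) {u v y : X} (hu : u ≠ y) (hv : v ≠ y) :
    (moveToTop L y).lt u v ↔ L.lt u v := by
  change (if u = y then (⊤ : WithTop X) else u) < (if v = y then (⊤ : WithTop X) else v) ↔ _
  rw [if_neg hu, if_neg hv, WithTop.coe_lt_coe]

theorem moveToTop_lt_self (L : LinearOrder X) {u y : X} (hu : u ≠ y) :
    (moveToTop L y).lt u y := by
  change (if u = y then (⊤ : WithTop X) else u) < (if y = y then (⊤ : WithTop X) else y)
  rw [if_neg hu, if_pos rfl]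
  exact WithTop.coe_lt_top u

theorem exists_linearOrder_lt {x y : X} (hxy : x ≠ y) : ∃ L : LinearOrder X, L.lt x y :=
  let ⟨L, _⟩ := exists_wellFoundedLT X
  ⟨moveToTop L y, moveToTop_lt_self L hxy⟩

theorem exists_linearOrder_lt_lt {x y z : X} (hxy : x ≠ y) (hyz : y ≠ z) (hxz : x ≠ z) :
    ∃ L : LinearOrder X, L.lt x y ∧ L.lt y z :=
  let ⟨L, hL⟩ := exists_linearOrder_lt hxy
  ⟨moveToTop L z, (moveToTop_lt_iff L hxz hyz).mpr hL, moveToTop_lt_self L hyz⟩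

end moveToTop

section Profile

variable {I X : Type*}

theorem exists_profile_setOf_lt_eq {x y : X} (hxy : x ≠ y) (S : Set I) :
    ∃ P : I → LinearOrder X, {i | (P i).lt x y} = S := by
  have voter : ∀ i, ∃ L : LinearOrder X, L.lt x y ↔ i ∈ S := by
    intro i
    by_cases hi : i ∈ S
    · obtain ⟨L, hL⟩ := exists_linearOrder_lt hxy
      exact ⟨L, iff_of_true hL hi⟩
    · obtain ⟨L, hL⟩ := exists_linearOrder_lt hxy.symm
      exact ⟨L, iff_of_false hL.not_gt hi⟩
  choose P hP using voter
  exact ⟨P, Set.ext hP⟩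

theorem exists_profile_setOf_lt_eq_inter {x y z : X} (hxy : x ≠ y) (hyz : y ≠ z) (hxz : x ≠ z)
    (S T : Set I) :
    ∃ P : I → LinearOrder X, {i | (P i).lt x y} = S ∧ {i | (P i).lt y z} = T ∧
      {i | (P i).lt x z} = S ∩ T := by
  have voter : ∀ i, ∃ L : LinearOrder X,
      (L.lt x y ↔ i ∈ S) ∧ (L.lt y z ↔ i ∈ T) ∧ (L.lt x z ↔ i ∈ S ∩ T) := by
    intro i
    by_cases hS : i ∈ S <;> by_cases hT : i ∈ T
    · obtain ⟨L, h₁, h₂⟩ := exists_linearOrder_lt_lt hxy hyz hxz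
      exact ⟨L, iff_of_true h₁ hS, iff_of_true h₂ hT, iff_of_true (h₁.trans h₂) ⟨hS, hT⟩⟩
    · obtain ⟨L, h₁, h₂⟩ := exists_linearOrder_lt_lt hxz.symm hxy hyz.symm
      exact ⟨L, iff_of_true h₂ hS, iff_of_false (h₁.trans h₂).not_gt hT,
        iff_of_false h₁.not_gt fun h => hT h.2⟩
    · obtain ⟨L, h₁, h₂⟩ := exists_linearOrder_lt_lt hyz hxz.symm hxy.symm
      exact ⟨L, iff_of_false (h₁.trans h₂).not_gt hS, iff_of_true h₁ hT,
        iff_of_false h₂.not_gt fun h => hS h.1⟩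
    · obtain ⟨L, h₁, h₂⟩ := exists_linearOrder_lt_lt hyz.symm hxy.symm hxz.symm
      exact ⟨L, iff_of_false h₂.not_gt hS, iff_of_false h₁.not_gt hT,
        iff_of_false (h₁.trans h₂).not_gt fun h => hS h.1⟩
  choose P hxy hyz hxz using voter
  exact ⟨P, Set.ext hxy, Set.ext hyz, Set.ext hxz⟩

end Profile

/-- A social welfare function turns a profile, which assigns to each voter in `I` a ranking of the
alternatives in `X`, into a collective ranking. Throughout, `L.lt x y` means that `L` ranks `y`
above `x`. -/
abbrev SocialWelfareFunction (I X : Type*) := (I → LinearOrder X) → LinearOrder X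

namespace SocialWelfareFunction

variable {I X : Type*} {F : SocialWelfareFunction I X} {S T : Set I} {x y z w : X}

/-- No collective preference between two alternatives is imposed regardless of the profile. This is
Arrow's form of the sovereignty of electors. -/
def IsNonimposed (F : SocialWelfareFunction I X) : Prop :=
  ∀ x y : X, x ≠ y → ∃ P, (F P).lt x y

/-- Positive correlation: raising `x` in some of the individual rankings, with everything else left
unchanged, does not cost `x` a collective win. -/
def IsPositivelyCorrelated (F : SocialWelfareFunction I X) : Prop :=
  ∀ (P P' : I → LinearOrder X) (x y : X),
    (∀ i, ∀ u v : X, u ≠ x → v ≠ x → ((P i).lt u v ↔ (P' i).lt u v)) →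
    (∀ i, ∀ u : X, (P i).lt u x → (P' i).lt u x) →
    (F P).lt y x → (F P').lt y x

/-- Independence of irrelevant alternatives: the collective ranking of two alternatives depends
only on how each voter ranks these two. -/
def IsIndependent (F : SocialWelfareFunction I X) : Prop :=
  ∀ (P P' : I → LinearOrder X) (x y : X),
    (∀ i, (P i).lt x y ↔ (P' i).lt x y) → ((F P).lt x y ↔ (F P').lt x y)

/-- The coalition `S` is decisive for `y` over `x` if `y` wins collectively whenever exactly the
voters in `S` rank `y` above `x`. -/
def IsDecisive (F : SocialWelfareFunction I X) (S : Set I) (x y : X) : Prop :=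
  ∀ P : I → LinearOrder X, {i | (P i).lt x y} = S → (F P).lt x y

/-- The weak Pareto principle: the coalition of all voters is decisive for every pair of distinct
alternatives. -/
def IsPareto (F : SocialWelfareFunction I X) : Prop :=
  ∀ x y : X, x ≠ y → F.IsDecisive Set.univ x y

theorem IsNonimposed.of_surjective (hF : Function.Surjective F) : F.IsNonimposed := by
  intro x y hxy
  obtain ⟨L, hL⟩ := exists_linearOrder_lt hxy
  obtain ⟨P, rfl⟩ := hF L
  exact ⟨P, hL⟩

theorem IsNonimposed.isPareto (sov : F.IsNonimposed) (pos : F.IsPositivelyCorrelated)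
    (iia : F.IsIndependent) : F.IsPareto := by
  intro x y hxy P hP
  obtain ⟨Q, hQ⟩ := sov x y hxy
  have raised : (F fun i => moveToTop (Q i) y).lt x y :=
    pos Q _ y x (fun i _ _ hu hv => (moveToTop_lt_iff (Q i) hu hv).symm)
      (fun i _ hu => let _ := Q i; moveToTop_lt_self (Q i) hu.ne) hQ
  refine (iia _ P x y fun i => ?_).mp raised
  exact iff_of_true (moveToTop_lt_self (Q i) hxy) (Set.eq_univ_iff_forall.mp hP i)

theorem IsIndependent.isDecisive_setOf_lt_iff (iia : F.IsIndependent) (P : I → LinearOrder X) :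
    F.IsDecisive {i | (P i).lt x y} x y ↔ (F P).lt x y :=
  ⟨fun h => h P rfl, fun h Q hQ => (iia Q P x y (Set.ext_iff.mp hQ)).mpr h⟩

theorem IsIndependent.isDecisive_compl_iff (iia : F.IsIndependent) (hxy : x ≠ y) :
    F.IsDecisive Sᶜ y x ↔ ¬ F.IsDecisive S x y := by
  obtain ⟨P, rfl⟩ := exists_profile_setOf_lt_eq hxy S
  have hcompl : {i | (P i).lt x y}ᶜ = {i | (P i).lt y x} :=
    Set.ext fun i => (lt_iff_not_gt_of_ne (P i) hxy.symm).symm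
  rw [hcompl, iia.isDecisive_setOf_lt_iff, iia.isDecisive_setOf_lt_iff]
  exact lt_iff_not_gt_of_ne (F P) hxy.symm

theorem IsDecisive.inter (hS : F.IsDecisive S x y) (hT : F.IsDecisive T y z)
    (iia : F.IsIndependent) (hxy : x ≠ y) (hyz : y ≠ z) (hxz : x ≠ z) :
    F.IsDecisive (S ∩ T) x z := by
  obtain ⟨P, hPxy, hPyz, hPxz⟩ := exists_profile_setOf_lt_eq_inter hxy hyz hxz S T
  rw [← hPxz, iia.isDecisive_setOf_lt_iff]
  let _ := F P
  exact (hS P hPxy).trans (hT P hPyz)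

theorem IsDecisive.congr_right (h : F.IsDecisive S x y) (par : F.IsPareto)
    (iia : F.IsIndependent) (hxy : x ≠ y) (hxz : x ≠ z) : F.IsDecisive S x z := by
  rcases eq_or_ne y z with rfl | hyz
  · exact h
  · simpa only [Set.inter_univ] using h.inter (par y z hyz) iia hxy hyz hxz

theorem IsDecisive.congr_left (h : F.IsDecisive S x y) (par : F.IsPareto)
    (iia : F.IsIndependent) (hxy : x ≠ y) (hzy : z ≠ y) : F.IsDecisive S z y := by
  rcases eq_or_ne z x with rfl | hzx
  · exact h
  · simpa only [Set.univ_inter] using (par z x hzx).inter h iia hzx hxy hzy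

theorem IsDecisive.congr (h : F.IsDecisive S x y) (par : F.IsPareto) (iia : F.IsIndependent)
    (third : ∀ u v : X, ∃ t, t ≠ u ∧ t ≠ v) (hxy : x ≠ y) (hzw : z ≠ w) :
    F.IsDecisive S z w := by
  obtain ⟨t, htx, htz⟩ := third x z
  have hxt : F.IsDecisive S x t := h.congr_right par iia hxy htx.symm
  have hzt : F.IsDecisive S z t := hxt.congr_left par iia htx.symm htz.symm
  exact hzt.congr_right par iia htz.symm hzw

end SocialWelfareFunction

theorem arrow_impossibility_general {I X : Type*} (hX : ∃ a b c : X, a ≠ b ∧ b ≠ c ∧ a ≠ c)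
    {F : SocialWelfareFunction I X} (sov : F.IsNonimposed) (pos : F.IsPositivelyCorrelated)
    (iia : F.IsIndependent) :
    ∃ U : Ultrafilter I, ∀ P x y, (F P).lt x y ↔ ∀ᶠ i in U, (P i).lt x y := by
  have par : F.IsPareto := sov.isPareto pos iia
  have neutral {S : Set I} {x y z w : X} (hxy : x ≠ y) (hzw : z ≠ w) :
      F.IsDecisive S x y ↔ F.IsDecisive S z w :=
    have third := exists_ne_ne_of_three_distinct hX
    ⟨fun h => h.congr par iia third hxy hzw, fun h => h.congr par iia third hzw hxy⟩
  obtain ⟨a, b, c, hab, hbc, hac⟩ := hX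
  obtain ⟨U, hU⟩ : ∃ U : Ultrafilter I, ∀ S, S ∈ U ↔ F.IsDecisive S a b :=
    exists_ultrafilter_mem_iff (par a b hab)
      (fun S T hS hT => (neutral hac hab).mp <|
        hS.inter ((neutral hab hbc).mp hT) iia hab hbc hac)
      (fun S => (neutral hab hab.symm).trans (iia.isDecisive_compl_iff hab))
  refine ⟨U, fun P x y => ?_⟩
  rcases eq_or_ne x y with rfl | hxy
  · simp [U.neBot.ne]
  · calc (F P).lt x y ↔ F.IsDecisive {i | (P i).lt x y} x y := (iia.isDecisive_setOf_lt_iff P).symm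
      _ ↔ F.IsDecisive {i | (P i).lt x y} a b := neutral hxy hab
      _ ↔ ∀ᶠ i in U, (P i).lt x y := (hU _).symm

/-- Arrow's impossibility theorem. `I` is a nonempty finite set of voters, `X` a set of
alternatives with at least three elements. A profile is a function `I → LinearOrder X`
assigning a linear preference order to each voter, and the social welfare function `F`
assigns a collective linear order to each profile. If `F` is surjective (sovereignty of
electors), positively correlated (raising the position of an alternative `x` in some
voters' rankings, while leaving all comparisons not involving `x` unchanged and never
dropping `x` below an alternative it was above, cannot make `x` lose a strict collective
win over some `y`), and independent of irrelevant alternatives (the collective ranking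
of `x` versus `y` only depends on the individual rankings of `x` versus `y`), then `F`
is a dictatorship: some voter `i` is such that `F P` is always voter `i`'s order. -/
theorem arrow_impossibility {I X : Type} [Fintype I] [Nonempty I]
    (hX : ∃ a b c : X, a ≠ b ∧ b ≠ c ∧ a ≠ c)
    (F : (I → LinearOrder X) → LinearOrder X)
    -- A1: sovereignty of electors
    (A1 : Function.Surjective F)
    -- A2: positive correlation
    (A2 : ∀ (P P' : I → LinearOrder X) (x y : X),
      (∀ i : I, ∀ u v : X, u ≠ x → v ≠ x → ((P i).lt u v ↔ (P' i).lt u v)) →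
      (∀ i : I, ∀ u : X, (P i).lt u x → (P' i).lt u x) →
      (F P).lt y x → (F P').lt y x)
    -- A3: independence of irrelevant alternatives
    (A3 : ∀ (P P' : I → LinearOrder X) (x y : X),
      (∀ i : I, ((P i).lt x y ↔ (P' i).lt x y)) →
      ((F P).lt x y ↔ (F P').lt x y)) :
    ∃ i : I, ∀ P : I → LinearOrder X, F P = P i := by
  obtain ⟨U, hU⟩ := arrow_impossibility_general hX (.of_surjective A1) A2 A3
  obtain ⟨i, rfl⟩ := U.eq_pure_of_finite
  exact ⟨i, fun P => LinearOrder.ext_lt fun x y => by simpa using hU P x y⟩
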